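/- arXiv:1801.00419 — 8 statements merged into one kernel-verified Lean document; each statement's English description precedes it below -/
import Mathlib

section
/- Let τ_n be a topology on 𝒪^n(ℱ_n), let ℱ_{n+1} ⊆ 𝒫(𝒪^n(ℱ_n)), and let τ_{n+1} be the topology on 𝒪^{n+1}(ℱ_{n+1}) consisting of all ℍ ⊆ 𝒪^{n+1}(ℱ_{n+1}) with {O^n(U) ∈ 𝒪^n(ℱ_n) : O^{n+1}(U) ∈ ℍ} ∈ τ_n. Then the topology t_{ℱ_{n+1}}(τ_{n+1}) on C(Y,Z) is contained in the topology t_{ℱ_n}(τ_n). -/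
open TopologicalSpace Set Topology

universe u v w

/-- Iterated stage types: `Stage Y 0 = 𝒪(Y)` and `Stage Y (k+1)` is the type in which the
level-`(k+1)` objects `O^{k+1}(U)` live. -/
@[reducible] def Stage (Y : Type u) [TopologicalSpace Y] : ℕ → Type u
  | 0 => Opens Y
  | k + 1 => Set (Set (Stage Y k))

/-- `famO F k U` is `O^{k+1}(U)`, where the family `ℱ_{k+1}` is `F k`.
So `famO F 0 U = O¹(U) = {φ ∈ ℱ₁ : U ∈ φ}` and
`famO F (k+1) U = O^{k+2}(U) = {φ ∈ ℱ_{k+2} : O^{k+1}(U) ∈ φ}`. -/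
def famO {Y : Type u} [TopologicalSpace Y] (F : ∀ k, Set (Set (Stage Y k))) :
    ∀ k, Opens Y → Stage Y (k + 1)
  | 0, U => {φ ∈ F 0 | U ∈ φ}
  | k + 1, U => {φ ∈ F (k + 1) | famO F k U ∈ φ}

variable {Y : Type u} [TopologicalSpace Y]

/-- The set `𝒪^{m+1}(ℱ_{m+1}) = {O^{m+1}(U) : U ∈ 𝒪(Y)}`, as a type. -/
abbrev OmegaN (F : ∀ k, Set (Set (Stage Y k))) (m : ℕ) : Type u :=
  {s : Stage Y (m + 1) // s ∈ Set.range (famO F m)}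

/-- The map `Φ_{ℱ_{m+1}} : 𝒪(Y) → 𝒪^{m+1}(ℱ_{m+1})`, `U ↦ O^{m+1}(U)`. -/
def onMap (F : ∀ k, Set (Set (Stage Y k))) (m : ℕ) (U : Opens Y) : OmegaN F m :=
  ⟨famO F m U, Set.mem_range_self U⟩

/-- The `ℱ_{m+1}(τ)`-family-open topology `t_{ℱ_{m+1}}(τ)` on `C(Y, Z)`: it is generated by the
subbasic sets `⟨ℍ, U⟩ = {f ∈ C(Y,Z) : O^{m+1}(f⁻¹(U)) ∈ ℍ}`, `ℍ ∈ τ`, `U ∈ 𝒪(Z)`. -/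
def famTop (Z : Type v) [TopologicalSpace Z] {Y : Type u} [TopologicalSpace Y]
    (F : ∀ k, Set (Set (Stage Y k))) (m : ℕ)
    (τ : TopologicalSpace (OmegaN F m)) : TopologicalSpace C(Y, Z) :=
  TopologicalSpace.generateFrom
    {S | ∃ (H : Set (OmegaN F m)) (U : Opens Z), IsOpen[τ] H ∧
      S = {f : C(Y, Z) | onMap F m (Opens.comap f U) ∈ H}}

/-- With `τ'` the topology on `𝒪^{n+1}(ℱ_{n+1})` induced from `τ` on `𝒪^n(ℱ_n)`, the topology
`t_{ℱ_{n+1}}(τ')` on `C(Y,Z)` is contained in `t_{ℱ_n}(τ)` (here `n = m + 1`). -/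
theorem stmt1 (Z : Type v) [TopologicalSpace Z] (F : ∀ k, Set (Set (Stage Y k)))
    (hF : ∀ k, ∀ φ ∈ F (k + 1), ∀ x ∈ φ, x ∈ Set.range (famO F k))
    (m : ℕ) (τ : TopologicalSpace (OmegaN F m)) (τ' : TopologicalSpace (OmegaN F (m + 1)))
    (hτ' : ∀ H : Set (OmegaN F (m + 1)),
      IsOpen[τ'] H ↔
        IsOpen[τ] {s : OmegaN F m |
          ∃ U : Opens Y, famO F m U = s.1 ∧ onMap F (m + 1) U ∈ H}) :
    ∀ S : Set C(Y, Z), IsOpen[famTop Z F (m + 1) τ'] S → IsOpen[famTop Z F m τ] S := by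
  have key : famTop Z F m τ ≤ famTop Z F (m + 1) τ' := by
    apply le_generateFrom
    rintro S ⟨H, U, hH, rfl⟩
    apply TopologicalSpace.isOpen_generateFrom_of_mem
    refine ⟨_, U, (hτ' H).1 hH, ?_⟩
    ext f
    constructor
    · intro h
      exact ⟨_, rfl, h⟩
    · rintro ⟨V, hV, h⟩
      have e : onMap F (m + 1) V = onMap F (m + 1) (Opens.comap f U) := by
        apply Subtype.ext
        change famO F (m + 1) V = famO F (m + 1) (Opens.comap f U)
        have hV' : famO F m V = famO F m (Opens.comap f U) := hV
        simp only [famO, hV']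
      change onMap F (m + 1) (Opens.comap f U) ∈ H
      rw [← e]
      exact h
  exact fun S hS => key S hS
end

section
/- Let τ_n be a topology on 𝒪^n(ℱ_n), let ℱ_{n+1} ⊆ 𝒫(𝒪^n(ℱ_n)), and let τ_{n+1} be the topology on 𝒪^{n+1}(ℱ_{n+1}) consisting of all ℍ ⊆ 𝒪^{n+1}(ℱ_{n+1}) with {O^n(U) ∈ 𝒪^n(ℱ_n) : O^{n+1}(U) ∈ ℍ} ∈ τ_n. If the topology t_{ℱ_{n+1}}(τ_{n+1}) on C(Y,Z) is jointly continuous, then the topology t_{ℱ_n}(τ_n) on C(Y,Z) is jointly continuous. -/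
open TopologicalSpace Set Topology

universe u v w

variable {Y : Type u} [TopologicalSpace Y]

/-- A topology `t` on `C(Y, Z)` is jointly continuous if for every topological space `X`,
continuity of `G : X → C_t(Y, Z)` implies continuity of `G̃ : X × Y → Z`, `G̃(x,y) = G(x)(y)`. -/
def IsJointlyContinuousTop {Y : Type u} {Z : Type v} [TopologicalSpace Y] [TopologicalSpace Z]
    (t : TopologicalSpace C(Y, Z)) : Prop :=
  ∀ (X : Type w) [tX : TopologicalSpace X] (G : X → C(Y, Z)),
    Continuous[tX, t] G → Continuous fun p : X × Y => G p.1 p.2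

/-- With `τ'` the topology on `𝒪^{n+1}(ℱ_{n+1})` induced from `τ` on `𝒪^n(ℱ_n)`: if
`t_{ℱ_{n+1}}(τ')` is jointly continuous then so is `t_{ℱ_n}(τ)` (here `n = m + 1`). -/
theorem stmt3 (Z : Type v) [TopologicalSpace Z] (F : ∀ k, Set (Set (Stage Y k)))
    (hF : ∀ k, ∀ φ ∈ F (k + 1), ∀ x ∈ φ, x ∈ Set.range (famO F k))
    (m : ℕ) (τ : TopologicalSpace (OmegaN F m)) (τ' : TopologicalSpace (OmegaN F (m + 1)))
    (hτ' : ∀ H : Set (OmegaN F (m + 1)),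
      IsOpen[τ'] H ↔
        IsOpen[τ] {s : OmegaN F m |
          ∃ U : Opens Y, famO F m U = s.1 ∧ onMap F (m + 1) U ∈ H})
    (hjc : IsJointlyContinuousTop.{u, v, w} (famTop Z F (m + 1) τ')) :
    IsJointlyContinuousTop.{u, v, w} (famTop Z F m τ) := by
  intro X tX G hG
  refine hjc X G ?_
  refine continuous_generateFrom_iff.2 ?_
  rintro S ⟨H, U, hH, rfl⟩
  have h1 := (hτ' H).1 hH
  have h2 := (continuous_generateFrom_iff.1 hG) _ ⟨_, U, h1, rfl⟩
  convert h2 using 1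
  ext x
  constructor
  · intro hx
    exact ⟨_, rfl, hx⟩
  · rintro ⟨V, hV, hx⟩
    have hV' : famO F m V = famO F m (Opens.comap (G x) U) := hV
    have e : onMap F (m + 1) V = onMap F (m + 1) (Opens.comap (G x) U) := by
      apply Subtype.ext
      simp only [onMap, famO, hV']
    rw [e] at hx
    exact hx
end

section
/- Let τ_n be a topology on the set 𝒪^n(ℱ_n), where Y and the Sierpiński space 𝐒 are as in the context. Then the mapping h_n : C_{t_{ℱ_n}(τ_n)}(Y, 𝐒) → (𝒪^n(ℱ_n), τ_n) defined by h_n(f) = O^n(f⁻¹({1})) is continuous, open, and onto. -/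
open TopologicalSpace Set Topology

universe u v w

variable {Y : Type u} [TopologicalSpace Y]

/-- The map `h_{m+1} : C(Y, 𝐒) → 𝒪^{m+1}(ℱ_{m+1})`, `h(f) = O^{m+1}(f⁻¹({1}))`, where the
Sierpiński space `𝐒` is realised as `Prop` (with `1 = True`, whose singleton is the nontrivial
open set). -/
def sierH {Y : Type u} [TopologicalSpace Y] (F : ∀ k, Set (Set (Stage Y k))) (m : ℕ) :
    C(Y, Prop) → OmegaN F m :=
  fun f => onMap F m ⟨f ⁻¹' {True}, f.continuous.isOpen_preimage _ isOpen_singleton_true⟩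

/-- The map `h_n : C_{t_{ℱ_n}(τ)}(Y, 𝐒) → (𝒪^n(ℱ_n), τ)`, `h_n(f) = O^n(f⁻¹({1}))`, is
continuous, open and onto (here `n = m + 1`). -/
theorem stmt4 (F : ∀ k, Set (Set (Stage Y k)))
    (hF : ∀ k, ∀ φ ∈ F (k + 1), ∀ x ∈ φ, x ∈ Set.range (famO F k))
    (m : ℕ) (τ : TopologicalSpace (OmegaN F m)) :
    Continuous[famTop Prop F m τ, τ] (sierH F m) ∧
    @IsOpenMap C(Y, Prop) (OmegaN F m) (famTop Prop F m τ) τ (sierH F m) ∧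
    Function.Surjective (sierH F m) := by
  have hsurj : Function.Surjective (sierH F m) := by
    rintro ⟨s, U, rfl⟩
    refine ⟨⟨fun y => y ∈ U, continuous_Prop.2 U.isOpen⟩, ?_⟩
    unfold sierH
    congr 1
    ext y
    simp
  have hc : ∀ H : Set (OmegaN F m), IsOpen[τ] H →
      IsOpen[famTop Prop F m τ] (sierH F m ⁻¹' H) := by
    intro H hH
    exact TopologicalSpace.isOpen_generateFrom_of_mem
      ⟨H, ⟨{True}, isOpen_singleton_true⟩, hH, rfl⟩
  have hle : TopologicalSpace.induced (sierH F m) τ ≤ famTop Prop F m τ := by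
    refine le_generateFrom ?_
    rintro S ⟨H, U, hH, rfl⟩
    by_cases h0 : False ∈ U
    · have hU : ∀ p : Prop, p ∈ U := by
        intro p
        have h := U.isOpen.mem_nhds h0
        rw [nhds_false, Filter.mem_top] at h
        exact h.symm.subset (Set.mem_univ p)
      have : ∀ f : C(Y, Prop), Opens.comap f U = ⊤ := by
        intro f
        ext y
        simp [hU]
      simp only [this]
      exact @isOpen_const _ (TopologicalSpace.induced (sierH F m) τ) _
    · by_cases h1 : True ∈ U
      · refine ⟨H, hH, ?_⟩
        have hU : U = ⟨{True}, isOpen_singleton_true⟩ := by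
          ext p
          by_cases hp : p <;> simp [hp, h0, h1]
        rw [hU]
        rfl
      · have : ∀ f : C(Y, Prop), Opens.comap f U = ⊥ := by
          intro f
          ext y
          by_cases hp : f y <;> simp [hp, h0, h1]
        simp only [this]
        exact @isOpen_const _ (TopologicalSpace.induced (sierH F m) τ) _
  refine ⟨@Continuous.mk _ _ (famTop Prop F m τ) τ _ hc, ?_, hsurj⟩
  intro S hS
  obtain ⟨H, hH, rfl⟩ := hle S hS
  rw [Set.image_preimage_eq H hsurj]
  exact hH
end

section
/- Let τ_n be a topology on the set 𝒪^n(ℱ_n). If the map Φ_{ℱ_n} : 𝒪(Y) → 𝒪^n(ℱ_n), Φ_{ℱ_n}(U) = O^n(U), is one-to-one, then the mapping h_n : C_{t_{ℱ_n}(τ_n)}(Y, 𝐒) → (𝒪^n(ℱ_n), τ_n) defined by h_n(f) = O^n(f⁻¹({1})) is a homeomorphism. -/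
open TopologicalSpace Set Topology

universe u v w

variable {Y : Type u} [TopologicalSpace Y]

/-- If the map `Φ_{ℱ_n} : 𝒪(Y) → 𝒪^n(ℱ_n)`, `U ↦ O^n(U)`, is one-to-one, then
`h_n : C_{t_{ℱ_n}(τ)}(Y, 𝐒) → (𝒪^n(ℱ_n), τ)`, `h_n(f) = O^n(f⁻¹({1}))`, is a homeomorphism
(here `n = m + 1`). -/
theorem stmt5 (F : ∀ k, Set (Set (Stage Y k)))
    (hF : ∀ k, ∀ φ ∈ F (k + 1), ∀ x ∈ φ, x ∈ Set.range (famO F k))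
    (m : ℕ) (τ : TopologicalSpace (OmegaN F m))
    (hinj : Function.Injective (onMap F m)) :
    @IsHomeomorph C(Y, Prop) (OmegaN F m) (famTop Prop F m τ) τ (sierH F m) := by
  have key : famTop Prop F m τ = TopologicalSpace.induced (sierH F m) τ := by
    apply le_antisymm
    · rintro S ⟨H, hH, rfl⟩
      refine TopologicalSpace.isOpen_generateFrom_of_mem
        ⟨H, ⟨{True}, isOpen_singleton_true⟩, hH, ?_⟩
      rfl
    · refine le_generateFrom ?_
      rintro S ⟨H, U, hH, rfl⟩
      by_cases hf : False ∈ U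
      · have hU : U = ⊤ := by
          have h1 : (U : Set Prop) ∈ 𝓝 False := U.isOpen.mem_nhds hf
          rw [nhds_false] at h1
          exact Opens.ext (Filter.mem_top.1 h1)
        subst hU
        exact @isOpen_const _ (TopologicalSpace.induced (sierH F m) τ) (onMap F m ⊤ ∈ H)
      · by_cases ht : True ∈ U
        · have hU : U = ⟨{True}, isOpen_singleton_true⟩ := by
            ext p
            by_cases hp : p <;> simp [hp, hf, ht]
          subst hU
          exact ⟨H, hH, rfl⟩
        · have hU : U = ⊥ := by
            ext p
            by_cases hp : p <;> simp [hp, hf, ht]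
          subst hU
          exact @isOpen_const _ (TopologicalSpace.induced (sierH F m) τ) (onMap F m ⊥ ∈ H)
  have hbij : Function.Bijective (sierH F m) := by
    constructor
    · intro f g hfg
      have h1 := congrArg (fun V : Opens Y => (V : Set Y)) (hinj hfg)
      ext y
      have h2 := Set.ext_iff.1 h1 y
      simpa using h2
    · rintro ⟨s, U, rfl⟩
      refine ⟨⟨fun y => y ∈ U, continuous_Prop.2 U.isOpen⟩, ?_⟩
      unfold sierH
      change _ = onMap F m U
      congr 1
      ext y
      simp
  letI := famTop Prop F m τ
  have hind : IsInducing (sierH F m) := ⟨key⟩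
  refine ⟨hind.continuous, ?_, hbij⟩
  exact hind.isOpenMap (by rw [hbij.surjective.range_eq]; exact isOpen_univ)
end

section
/- Let Y be a topological space, τ_0 a T₀-topology on 𝒪(Y), and for each i = 1, …, n−1 let τ_i be a T₀-topology on 𝒪^i(ℱ_i), where the families are chosen so that ℱ_{i+1} = τ_i for every i = 0, 1, …, n−1 (so ℱ₁ = τ_0). Then for any topology τ_n on 𝒪^n(ℱ_n), the spaces C_{t_{ℱ_n}(τ_n)}(Y, 𝐒) and (𝒪^n(ℱ_n), τ_n) are homeomorphic. -/
open TopologicalSpace Set Topology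

universe u v w

variable {Y : Type u} [TopologicalSpace Y]

theorem famO_inj (m : ℕ)
    (t0 : TopologicalSpace (Opens Y)) (ht0 : @T0Space (Opens Y) t0)
    (F : ∀ k, Set (Set (Stage Y k)))
    (t : ∀ k, TopologicalSpace (OmegaN F k))
    (hT0 : ∀ k < m, @T0Space (OmegaN F k) (t k))
    (hF0 : F 0 = {s : Set (Opens Y) | IsOpen[t0] s})
    (hFk : ∀ k < m, F (k + 1) =
      {A : Set (Stage Y (k + 1)) |
        ∃ H : Set (OmegaN F k), IsOpen[t k] H ∧ A = Subtype.val '' H}) :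
    ∀ k ≤ m, Function.Injective (famO F k) := by
  intro k
  induction k with
  | zero =>
    intro _ U V h
    refine (@inseparable_iff_eq _ t0 ht0 U V).1
      ((@inseparable_iff_forall_isOpen _ t0 U V).2 fun s hs => ?_)
    have h1 : (s ∈ {φ ∈ F 0 | U ∈ φ}) ↔ (s ∈ {φ ∈ F 0 | V ∈ φ}) :=
      iff_of_eq (congrArg (fun A : Set (Set (Opens Y)) => s ∈ A) h)
    have hs' : s ∈ F 0 := by rw [hF0]; exact hs
    exact ⟨fun hU => (h1.1 ⟨hs', hU⟩).2, fun hV => (h1.2 ⟨hs', hV⟩).2⟩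
  | succ k ih =>
    intro hk U V h
    apply ih (by omega)
    have key : onMap F k U = onMap F k V := by
      refine (@inseparable_iff_eq _ (t k) (hT0 k (by omega)) _ _).1
        ((@inseparable_iff_forall_isOpen _ (t k) _ _).2 fun s hs => ?_)
      have h1 : (Subtype.val '' s ∈ {φ ∈ F (k + 1) | famO F k U ∈ φ}) ↔
          (Subtype.val '' s ∈ {φ ∈ F (k + 1) | famO F k V ∈ φ}) :=
        iff_of_eq (congrArg (fun A : Set (Set (Stage Y (k + 1))) => Subtype.val '' s ∈ A) h)
      have hs' : Subtype.val '' s ∈ F (k + 1) := by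
        rw [hFk k (by omega)]; exact ⟨s, hs, rfl⟩
      have hm : ∀ W : Opens Y, famO F k W ∈ Subtype.val '' s ↔ onMap F k W ∈ s := by
        intro W
        constructor
        · rintro ⟨x, hx, hxe⟩
          have : x = onMap F k W := Subtype.ext hxe
          exact this ▸ hx
        · intro hW
          exact ⟨_, hW, rfl⟩
      rw [← hm, ← hm]
      exact ⟨fun hU => (h1.1 ⟨hs', hU⟩).2, fun hV => (h1.2 ⟨hs', hV⟩).2⟩
    exact congrArg Subtype.val key

/-- Let `τ₀` be a `T₀` topology on `𝒪(Y)` and, for `i = 1, …, n-1`, let `τᵢ` be a `T₀` topology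
on `𝒪ⁱ(ℱᵢ)`, the families being chosen so that `ℱ_{i+1} = τᵢ` for `i = 0, …, n-1` (in particular
`ℱ₁ = τ₀`; a topology is identified with its family of open sets, an open subset of the subtype
`𝒪ⁱ(ℱᵢ)` being identified with the corresponding set via the inclusion). Then for any topology
`τ` on `𝒪ⁿ(ℱₙ)` the spaces `C_{t_{ℱₙ}(τ)}(Y, 𝐒)` and `(𝒪ⁿ(ℱₙ), τ)` are homeomorphic
(here `n = m + 1`, `t k = τ_{k+1}` and `F k = ℱ_{k+1}`). -/
theorem stmt6 (m : ℕ)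
    (t0 : TopologicalSpace (Opens Y)) (ht0 : @T0Space (Opens Y) t0)
    (F : ∀ k, Set (Set (Stage Y k)))
    (t : ∀ k, TopologicalSpace (OmegaN F k))
    (hT0 : ∀ k < m, @T0Space (OmegaN F k) (t k))
    (hF0 : F 0 = {s : Set (Opens Y) | IsOpen[t0] s})
    (hFk : ∀ k < m, F (k + 1) =
      {A : Set (Stage Y (k + 1)) |
        ∃ H : Set (OmegaN F k), IsOpen[t k] H ∧ A = Subtype.val '' H})
    (τ : TopologicalSpace (OmegaN F m)) :
    Nonempty (@Homeomorph C(Y, Prop) (OmegaN F m) (famTop Prop F m τ) τ) := by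
  have inj := famO_inj m t0 ht0 F t hT0 hF0 hFk m le_rfl
  let T : Opens Prop := ⟨{True}, isOpen_singleton_true⟩
  let e : C(Y, Prop) → OmegaN F m := fun f => onMap F m (Opens.comap f T)
  have hmem : ∀ (f : C(Y, Prop)) (y : Y), y ∈ Opens.comap f T ↔ f y := by
    intro f y
    change f y ∈ ({True} : Set Prop) ↔ f y
    simp
  have hbij : Function.Bijective e := by
    constructor
    · intro f g h
      have h2 : Opens.comap f T = Opens.comap g T := inj (congrArg Subtype.val h)
      ext y
      rw [← hmem f y, ← hmem g y, h2]
    · rintro ⟨_, U, rfl⟩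
      refine ⟨⟨fun y => y ∈ U, isOpen_iff_continuous_mem.1 U.isOpen⟩, ?_⟩
      refine congrArg (onMap F m) ?_
      ext y
      exact hmem _ y
  have hind : famTop Prop F m τ = TopologicalSpace.induced e τ := by
    apply le_antisymm
    · rintro _ ⟨H, hH, rfl⟩
      exact TopologicalSpace.isOpen_generateFrom_of_mem ⟨H, T, hH, rfl⟩
    · apply le_generateFrom
      rintro _ ⟨H, U, hH, rfl⟩
      by_cases h1 : True ∈ U
      · by_cases h2 : False ∈ U
        · have : U = ⊤ := by
            ext p
            by_cases hp : p <;> simp [hp, h1, h2]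
          subst this
          exact @isOpen_const _ (TopologicalSpace.induced e τ) (onMap F m ⊤ ∈ H)
        · have : U = T := by
            ext p
            by_cases hp : p <;> simp [hp, h1, h2, T]
          subst this
          exact ⟨H, hH, rfl⟩
      · have hb : U = ⊥ := by
          have h2 : False ∉ U := by
            intro h2
            apply h1
            have hs : (U : Set Prop) ∈ 𝓝 False := U.isOpen.mem_nhds h2
            rw [nhds_false, Filter.mem_top] at hs
            change True ∈ (U : Set Prop)
            rw [hs]
            exact mem_univ _
          ext p
          by_cases hp : p <;> simp [hp, h1, h2]
        subst hb
        exact @isOpen_const _ (TopologicalSpace.induced e τ) (onMap F m ⊥ ∈ H)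
  letI := famTop Prop F m τ
  letI := τ
  exact ⟨(Equiv.ofBijective e hbij).toHomeomorphOfIsInducing ⟨hind⟩⟩
end

section
/- Let 𝒜 be an arbitrary family of topological spaces and τ_n a topology on 𝒪^n(ℱ_n). The topology t_{ℱ_n}(τ_n) on C(Y,Z) is 𝒜-jointly continuous if and only if for every space X ∈ 𝒜 and every map G : X → C(Y,Z), the continuity with respect to the first variable of the map Ḡ_n : X × 𝒪(Z) → 𝒪^n(ℱ_n) defined by Ḡ_n(x,U) = O^n((G(x))⁻¹(U)) implies the continuity of the map G̃ : X×Y → Z, G̃(x,y) = G(x)(y). -/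
open TopologicalSpace Set Topology

universe u v w

variable {Y : Type u} [TopologicalSpace Y]

/-- A topology `t` on `C(Y, Z)` is `𝒜`-jointly continuous if for every topological space `X`
in the family `𝒜`, continuity of `G : X → C_t(Y, Z)` implies continuity of `G̃ : X × Y → Z`. -/
def IsAJointlyContinuousTop {Y : Type u} {Z : Type v} [TopologicalSpace Y] [TopologicalSpace Z]
    (𝒜 : (X : Type w) → TopologicalSpace X → Prop) (t : TopologicalSpace C(Y, Z)) : Prop :=
  ∀ (X : Type w) [tX : TopologicalSpace X], 𝒜 X tX →
    ∀ (G : X → C(Y, Z)), Continuous[tX, t] G → Continuous fun p : X × Y => G p.1 p.2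

theorem cont_famTop_iff (Z : Type v) [TopologicalSpace Z] (F : ∀ k, Set (Set (Stage Y k)))
    (m : ℕ) (τ : TopologicalSpace (OmegaN F m)) (X : Type w) [tX : TopologicalSpace X]
    (G : X → C(Y, Z)) :
    Continuous[tX, famTop Z F m τ] G ↔
      ∀ U : Opens Z, Continuous[tX, τ] fun x : X => onMap F m (Opens.comap (G x) U) := by
  unfold famTop
  rw [continuous_generateFrom_iff]
  constructor
  · intro h U
    rw [continuous_def]
    intro H hH
    exact h _ ⟨H, U, hH, rfl⟩
  · rintro h _ ⟨H, U, hH, rfl⟩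
    exact (continuous_def.1 (h U)) H hH

/-- The topology `t_{ℱ_n}(τ)` on `C(Y,Z)` is `𝒜`-jointly continuous iff for every `X ∈ 𝒜` and
every `G : X → C(Y,Z)`, continuity with respect to the first variable of
`Ḡ_n : X × 𝒪(Z) → 𝒪^n(ℱ_n)`, `Ḡ_n(x, U) = O^n((G(x))⁻¹(U))`, implies continuity of
`G̃ : X × Y → Z`, `G̃(x,y) = G(x)(y)` (here `n = m + 1`). -/
theorem stmt15 (Z : Type v) [TopologicalSpace Z] (F : ∀ k, Set (Set (Stage Y k)))
    (hF : ∀ k, ∀ φ ∈ F (k + 1), ∀ x ∈ φ, x ∈ Set.range (famO F k))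
    (m : ℕ) (τ : TopologicalSpace (OmegaN F m))
    (𝒜 : (X : Type w) → TopologicalSpace X → Prop) :
    IsAJointlyContinuousTop 𝒜 (famTop Z F m τ) ↔
      ∀ (X : Type w) [tX : TopologicalSpace X], 𝒜 X tX →
        ∀ G : X → C(Y, Z),
          (∀ U : Opens Z, Continuous[tX, τ] fun x : X => onMap F m (Opens.comap (G x) U)) →
          Continuous fun p : X × Y => G p.1 p.2 := by
  constructor
  · intro h X tX hX G hG
    exact h X hX G ((cont_famTop_iff Z F m τ X G).2 hG)
  · intro h X tX hX G hG
    exact h X hX G ((cont_famTop_iff Z F m τ X G).1 hG)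
end

section
/- Let τ_n be a topology on 𝒪^n(ℱ_n). The topology t_{ℱ_n}(τ_n) on C(Y,Z) is jointly continuous if and only if for every topological space X and every map G : X → C(Y,Z), the continuity with respect to the first variable of the map Ḡ_n : X × 𝒪(Z) → 𝒪^n(ℱ_n) defined by Ḡ_n(x,U) = O^n((G(x))⁻¹(U)) implies the continuity of the map G̃ : X×Y → Z, G̃(x,y) = G(x)(y). -/
open TopologicalSpace Set Topology

universe u v w

variable {Y : Type u} [TopologicalSpace Y]

/-- The topology `t_{ℱ_n}(τ)` on `C(Y,Z)` is jointly continuous iff for every topological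
space `X` and every `G : X → C(Y,Z)`, continuity with respect to the first variable of
`Ḡ_n : X × 𝒪(Z) → 𝒪^n(ℱ_n)`, `Ḡ_n(x, U) = O^n((G(x))⁻¹(U))`, implies continuity of
`G̃ : X × Y → Z`, `G̃(x,y) = G(x)(y)` (here `n = m + 1`). -/
theorem stmt16 (Z : Type v) [TopologicalSpace Z] (F : ∀ k, Set (Set (Stage Y k)))
    (hF : ∀ k, ∀ φ ∈ F (k + 1), ∀ x ∈ φ, x ∈ Set.range (famO F k))
    (m : ℕ) (τ : TopologicalSpace (OmegaN F m)) :
    IsJointlyContinuousTop.{u, v, w} (famTop Z F m τ) ↔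
      ∀ (X : Type w) [tX : TopologicalSpace X],
        ∀ G : X → C(Y, Z),
          (∀ U : Opens Z, Continuous[tX, τ] fun x : X => onMap F m (Opens.comap (G x) U)) →
          Continuous fun p : X × Y => G p.1 p.2 := by
  have key : ∀ (X : Type w) [tX : TopologicalSpace X] (G : X → C(Y, Z)),
      Continuous[tX, famTop Z F m τ] G ↔
        ∀ U : Opens Z, Continuous[tX, τ] fun x : X => onMap F m (Opens.comap (G x) U) := by
    intro X tX G
    constructor
    · intro h U
      refine continuous_def.2 fun H hH => ?_
      have h2 := (continuous_generateFrom_iff.1 h)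
        {f : C(Y, Z) | onMap F m (Opens.comap f U) ∈ H} ⟨H, U, hH, rfl⟩
      exact h2
    · intro h
      refine continuous_generateFrom_iff.2 ?_
      rintro S ⟨H, U, hH, rfl⟩
      exact (continuous_def.1 (h U)) H hH
  constructor
  · intro h X tX G hG
    exact h X G ((key X G).2 hG)
  · intro h X tX G hG
    exact h X G ((key X G).1 hG)
end

section
/- Let ℱ₁ be a subset of the Scott topology τ_Sc(𝒪(Y)). Then the map Φ_{ℱ₁} : 𝒪(Y) → 𝒪¹(ℱ₁), Φ_{ℱ₁}(U) = O¹(U), is Scott continuous, i.e., continuous when 𝒪(Y) and 𝒪¹(ℱ₁) each carry the Scott topology induced by the inclusion order. -/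
open TopologicalSpace Set Topology

universe u v w

/-- A subset of a poset is Scott open if it is an upper set and every directed set whose
supremum lies in it meets it. -/
def ScottOpen {P : Type*} [Preorder P] (H : Set P) : Prop :=
  IsUpperSet H ∧ ∀ D : Set P, D.Nonempty → DirectedOn (· ≤ ·) D →
    ∀ a : P, IsLUB D a → a ∈ H → (D ∩ H).Nonempty

/-- The Scott topology on a poset: the Scott open sets form a topology, so the topology
generated by them has exactly the Scott open sets as its open sets. -/
def scottTop (P : Type*) [Preorder P] : TopologicalSpace P :=
  TopologicalSpace.generateFrom {H : Set P | ScottOpen H}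

/-- `O¹(U) = {φ ∈ ℱ₁ : U ∈ φ}`. -/
def O1 {Y : Type u} [TopologicalSpace Y] (F1 : Set (Set (Opens Y))) (U : Opens Y) :
    Set (Set (Opens Y)) :=
  {φ ∈ F1 | U ∈ φ}

variable {Y : Type u} [TopologicalSpace Y]

/-- The set `𝒪¹(ℱ₁) = {O¹(U) : U ∈ 𝒪(Y)}`, as a type. -/
abbrev Omega1 (F1 : Set (Set (Opens Y))) : Type u :=
  {s : Set (Set (Opens Y)) // s ∈ Set.range (O1 F1)}

/-- If `ℱ₁ ⊆ τ_Sc(𝒪(Y))`, then the map `Φ_{ℱ₁} : 𝒪(Y) → 𝒪¹(ℱ₁)`, `U ↦ O¹(U)`, is Scott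
continuous (both posets being ordered by inclusion). -/
theorem stmt18 (F1 : Set (Set (Opens Y))) (hF1 : ∀ φ ∈ F1, ScottOpen φ) :
    Continuous[scottTop (Opens Y), scottTop (Omega1 F1)]
      fun U : Opens Y => (⟨O1 F1 U, Set.mem_range_self U⟩ : Omega1 F1) := by
  have mono : ∀ U V : Opens Y, U ≤ V →
      (⟨O1 F1 U, Set.mem_range_self U⟩ : Omega1 F1) ≤ ⟨O1 F1 V, Set.mem_range_self V⟩ := by
    intro U V hUV
    change O1 F1 U ⊆ O1 F1 V
    rintro φ ⟨hφ, hU⟩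
    exact ⟨hφ, (hF1 φ hφ).1 hUV hU⟩
  unfold scottTop
  refine continuous_generateFrom_iff.2 ?_
  intro H hH
  refine TopologicalSpace.isOpen_generateFrom_of_mem ⟨?_, ?_⟩
  · intro U V hUV hU
    exact hH.1 (mono U V hUV) hU
  · intro D hne hD a ha haH
    obtain ⟨x, ⟨U, hU, rfl⟩, hxH⟩ := hH.2
      ((fun U : Opens Y => (⟨O1 F1 U, Set.mem_range_self U⟩ : Omega1 F1)) '' D)
      (hne.image _)
      (by
        rintro _ ⟨U, hU, rfl⟩ _ ⟨V, hV, rfl⟩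
        obtain ⟨W, hW, h1, h2⟩ := hD U hU V hV
        exact ⟨_, ⟨W, hW, rfl⟩, mono _ _ h1, mono _ _ h2⟩)
      ⟨O1 F1 a, Set.mem_range_self a⟩
      (by
        constructor
        · rintro _ ⟨U, hU, rfl⟩
          exact mono _ _ (ha.1 hU)
        · intro b hb
          change O1 F1 a ⊆ b.1
          rintro φ ⟨hφ, haφ⟩
          obtain ⟨U, hU, hUφ⟩ := (hF1 φ hφ).2 D hne hD a ha haφ
          have h : O1 F1 U ⊆ b.1 := hb ⟨U, hU, rfl⟩
          exact h ⟨hφ, hUφ⟩)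
      haH
    exact ⟨U, hU, hxH⟩
end
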